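/- Let F(x,y) = ((x − s(y))/2 + (√3/2)y, −(√3/2)(x − s(y)) + y/2). Every point of the grid 𝔉 (the non zero-free set of F) is a periodic point of F, and its minimal period is of the form 36n+6, 18n+9, 18n+15, or 108n+72 for some n ∈ ℕ₀. Moreover, F is pointwise periodic on all of ℝ², and the set of minimal periods of points of F equals {6n+1 : n ∈ ℕ₀} ∪ {12n+8 : n ∈ ℕ₀} ∪ {12n+10 : n ∈ ℕ₀} ∪ {18n+9 : n ∈ ℕ₀} ∪ {18n+15 : n ∈ ℕ₀} ∪ {36n+6 : n ∈ ℕ₀} ∪ {36n+24 : n ∈ ℕ₀} ∪ {36n+30 : n ∈ ℕ₀} ∪ {108n+72 : n ∈ ℕ₀}. -/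

import Mathlib

noncomputable def s (y : ℝ) : ℝ := if 0 ≤ y then 1 else -1

/-- The map `F_α` of the paper for `α = π/3`. -/
noncomputable def F (q : ℝ × ℝ) : ℝ × ℝ :=
  ((q.1 - s q.2) / 2 + (Real.sqrt 3 / 2) * q.2,
   -(Real.sqrt 3 / 2) * (q.1 - s q.2) + q.2 / 2)

/-- The grid `𝔉` (trihexagonal tiling lines) of the `α = π/3` map. -/
def grid : Set (ℝ × ℝ) :=
  {q | (∃ k : ℤ, q.2 = Real.sqrt 3 * (q.1 - 2 * k - 1)) ∨
       (∃ ℓ : ℤ, q.2 = Real.sqrt 3 * ℓ) ∨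
       (∃ m : ℤ, q.2 = -Real.sqrt 3 * (q.1 - 2 * m))}

/-!
In the coordinates `(u, v) = (x + y / √3, 2 y / √3)` the map `F` becomes `(u, v) ↦ (v, v - u ± 1)`,
an affine rotation of order six on each half-plane. Two core hexagons about `±(1, 1)` are invariant;
every other orbit meets a section parametrised by the square `[-2, 2)²` together with an integer
level `j ≥ -1`. The return time to the section is `6 j + 7`, and the first return map is the same
rotation taken modulo `4`, the level changing by the number of reductions. On each cell of the
square, the return map comes back to the cell and to the initial level by an affine map of finite
order, so every orbit closes up after at most eighteen returns, and its minimal period is the sum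
of the return times along the cycle.
-/

open Function Set

section MinimalPeriod

variable {α β : Type*}

theorem minimalPeriod_iterate_of_injective {f : α → α} (hf : Injective f) (n : ℕ) (x : α) :
    minimalPeriod f (f^[n] x) = minimalPeriod f x :=
  minimalPeriod_eq_minimalPeriod_iff.2 fun m => by
    rw [IsPeriodicPt, IsFixedPt, ← iterate_add_apply, add_comm, iterate_add_apply,
      (hf.iterate n).eq_iff]
    rfl

theorem iterate_comp_of_semiconjOn {f : α → α} {g : β → β} {φ : β → α} {t : Set β}
    (hg : MapsTo g t t) (h : ∀ x ∈ t, f (φ x) = φ (g x)) (n : ℕ) {x : β} (hx : x ∈ t) :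
    f^[n] (φ x) = φ (g^[n] x) := by
  induction n with
  | zero => rfl
  | succ n ih => rw [iterate_succ_apply', iterate_succ_apply', ih, h _ (hg.iterate n hx)]

theorem minimalPeriod_of_semiconjOn {f : α → α} {g : β → β} {φ : β → α} {t : Set β}
    (hg : MapsTo g t t) (hφ : InjOn φ t) (h : ∀ x ∈ t, f (φ x) = φ (g x)) {x : β} (hx : x ∈ t) :
    minimalPeriod f (φ x) = minimalPeriod g x :=
  minimalPeriod_eq_minimalPeriod_iff.2 fun n => by
    rw [IsPeriodicPt, IsFixedPt, iterate_comp_of_semiconjOn hg h n hx,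
      hφ.eq_iff (hg.iterate n hx) hx]
    rfl

theorem minimalPeriod_of_eqOn {f g : α → α} {t : Set α} (hg : MapsTo g t t) (h : EqOn f g t)
    {x : α} (hx : x ∈ t) : minimalPeriod f x = minimalPeriod g x :=
  minimalPeriod_of_semiconjOn hg injective_id.injOn h hx

theorem minimalPeriod_eq_of_forall_prime_dvd {f : α → α} {x : α} {n : ℕ}
    (hx : IsPeriodicPt f n x)
    (h : ∀ p : ℕ, p.Prime → p ∣ n → ¬IsPeriodicPt f (n / p) x) : minimalPeriod f x = n := by
  obtain ⟨d, hd⟩ := hx.minimalPeriod_dvd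
  by_contra hne
  obtain ⟨p, hp, c, rfl⟩ :=
    Nat.exists_prime_and_dvd (n := d) fun h1 => hne (by rw [hd, h1, mul_one])
  refine h p hp ⟨_, hd.trans (mul_left_comm _ _ _)⟩ (isPeriodicPt_iff_minimalPeriod_dvd.2 ⟨c, ?_⟩)
  rw [hd, mul_left_comm, Nat.mul_div_cancel_left _ hp.pos]

theorem minimalPeriod_eq_of_dvd_six_pow {f : α → α} {x : α} {n m : ℕ} (hn : n ∣ 6 ^ m)
    (hx : IsPeriodicPt f n x) (h₂ : 2 ∣ n → ¬IsPeriodicPt f (n / 2) x)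
    (h₃ : 3 ∣ n → ¬IsPeriodicPt f (n / 3) x) : minimalPeriod f x = n := by
  refine minimalPeriod_eq_of_forall_prime_dvd hx fun p hp hpn => ?_
  have hp6 : p ∣ 2 * 3 := hp.dvd_of_dvd_pow (hpn.trans hn)
  rcases hp.dvd_mul.1 hp6 with hp' | hp'
  · obtain rfl := (Nat.prime_dvd_prime_iff_eq hp Nat.prime_two).1 hp'
    exact h₂ hpn
  · obtain rfl := (Nat.prime_dvd_prime_iff_eq hp Nat.prime_three).1 hp'
    exact h₃ hpn

end MinimalPeriod

section FirstReturn

variable {α β : Type*}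

theorem birkhoffSum_dvd_birkhoffSum_mul {M : Type*} [CommSemiring M] {g : β → β} {n : ℕ} {x : β}
    (hx : IsPeriodicPt g n x) (τ : β → M) (c : ℕ) :
    birkhoffSum g τ n x ∣ birkhoffSum g τ (n * c) x := by
  induction c with
  | zero => simp
  | succ c ih =>
    rw [Nat.mul_succ, birkhoffSum_add, (hx.mul_const c).eq]
    exact dvd_add ih dvd_rfl

/-- The orbit segment of `f` of length `n` starting at `p` ends at `q` and does not meet `S`
strictly in between; the endpoints themselves may or may not lie in `S`. -/
structure ReachesAvoiding (f : α → α) (S : Set α) (n : ℕ) (p q : α) : Prop where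
  iterate_eq : f^[n] p = q
  notMem_of_lt : ∀ i, 0 < i → i < n → f^[i] p ∉ S

namespace ReachesAvoiding

variable {f : α → α} {S : Set α} {m n : ℕ} {p q r : α}

theorem of_apply_eq (h : f p = q) : ReachesAvoiding f S 1 p q :=
  ⟨h, by omega⟩

theorem trans (h₁ : ReachesAvoiding f S m p q) (hq : q ∉ S) (h₂ : ReachesAvoiding f S n q r) :
    ReachesAvoiding f S (m + n) p r where
  iterate_eq := by rw [add_comm, iterate_add_apply, h₁.iterate_eq, h₂.iterate_eq]
  notMem_of_lt i hi hi' := by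
    rcases lt_trichotomy i m with him | rfl | him
    · exact h₁.notMem_of_lt i hi him
    · rwa [h₁.iterate_eq]
    · obtain ⟨k, rfl⟩ := Nat.exists_eq_add_of_lt him
      rw [add_assoc, add_comm, iterate_add_apply, h₁.iterate_eq]
      exact h₂.notMem_of_lt _ (by omega) (by omega)

end ReachesAvoiding

/-- The first return of `f` to the section `S` along the image of `V` under the parametrisation
`φ` is `g` in the parameter, with return time `τ`. The section may be larger than `φ '' V`. -/
structure IsFirstReturn (f : α → α) (S : Set α) (V : Set β) (φ : β → α) (g : β → β)
    (τ : β → ℕ) : Prop where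
  mapsTo : MapsTo g V V
  mapsTo_section : MapsTo φ V S
  injOn : InjOn φ V
  time_pos : ∀ x ∈ V, 0 < τ x
  reachesAvoiding : ∀ x ∈ V, ReachesAvoiding f S (τ x) (φ x) (φ (g x))

namespace IsFirstReturn

variable {f : α → α} {S : Set α} {V : Set β} {φ : β → α} {g : β → β} {τ : β → ℕ} {x : β}

theorem iterate_birkhoffSum (h : IsFirstReturn f S V φ g τ) (hx : x ∈ V) (k : ℕ) :
    f^[birkhoffSum g τ k x] (φ x) = φ (g^[k] x) := by
  induction k with
  | zero => rfl
  | succ k ih =>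
    rw [birkhoffSum_succ, add_comm, iterate_add_apply, ih, iterate_succ_apply']
    exact (h.reachesAvoiding _ (h.mapsTo.iterate k hx)).iterate_eq

theorem exists_birkhoffSum_eq (h : IsFirstReturn f S V φ g τ) (hx : x ∈ V) {m : ℕ}
    (hm : f^[m] (φ x) ∈ S) : ∃ k, m = birkhoffSum g τ k x := by
  induction m using Nat.strong_induction_on generalizing x with
  | _ m ih =>
    rcases m.eq_zero_or_pos with rfl | hpos
    · exact ⟨0, (birkhoffSum_zero g τ x).symm⟩
    have hτ := h.reachesAvoiding x hx
    obtain ⟨d, rfl⟩ : ∃ d, m = d + τ x :=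
      Nat.exists_eq_add_of_le' (not_lt.1 fun hlt => hτ.notMem_of_lt m hpos hlt hm)
    rw [iterate_add_apply, hτ.iterate_eq] at hm
    obtain ⟨k, rfl⟩ := ih d (by have := h.time_pos x hx; omega) (h.mapsTo hx) hm
    exact ⟨k + 1, by rw [birkhoffSum_succ', add_comm]⟩

theorem minimalPeriod_eq_birkhoffSum (h : IsFirstReturn f S V φ g τ) (hx : x ∈ V) :
    minimalPeriod f (φ x) = birkhoffSum g τ (minimalPeriod g x) x := by
  refine Nat.dvd_antisymm (IsPeriodicPt.minimalPeriod_dvd ?_) ?_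
  · rw [IsPeriodicPt, IsFixedPt, h.iterate_birkhoffSum hx, iterate_minimalPeriod]
  obtain ⟨k, hk⟩ := h.exists_birkhoffSum_eq hx (m := minimalPeriod f (φ x)) (by
    rw [iterate_minimalPeriod]
    exact h.mapsTo_section hx)
  have hgk : IsPeriodicPt g k x := h.injOn (h.mapsTo.iterate k hx) hx (by
    rw [← h.iterate_birkhoffSum hx, ← hk, iterate_minimalPeriod])
  obtain ⟨c, rfl⟩ := hgk.minimalPeriod_dvd
  exact hk ▸ birkhoffSum_dvd_birkhoffSum_mul (isPeriodicPt_minimalPeriod g x) τ c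

end IsFirstReturn

end FirstReturn

section HexRotation

/-- The affine rotation of order six about `(c, c)`, in coordinates with axes at `60°`. The map
`F` is `hexRotation (±1)` on each half-plane. -/
def hexRotation (c : ℝ) (p : ℝ × ℝ) : ℝ × ℝ :=
  (p.2, p.2 - p.1 + c)

/-- The open hexagon with centre `(c, c)` preserved by `hexRotation c`. -/
def openHexagon (c : ℝ) : Set (ℝ × ℝ) :=
  {p | |p.1 - c| < 1 ∧ |p.2 - c| < 1 ∧ |p.1 - p.2| < 1}

/-- The closed hexagon with centre `(c, c)` preserved by `hexRotation c`. -/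
def closedHexagon (c : ℝ) : Set (ℝ × ℝ) :=
  {p | |p.1 - c| ≤ 1 ∧ |p.2 - c| ≤ 1 ∧ |p.1 - p.2| ≤ 1}

variable {c : ℝ} {p : ℝ × ℝ}

theorem mapsTo_hexRotation_openHexagon (c : ℝ) :
    MapsTo (hexRotation c) (openHexagon c) (openHexagon c) := fun p ⟨h₁, h₂, h₃⟩ =>
  ⟨h₂, by rwa [hexRotation, add_sub_cancel_right, abs_sub_comm],
    by rwa [hexRotation, ← sub_sub, sub_sub_cancel]⟩

theorem mapsTo_hexRotation_closedHexagon (c : ℝ) :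
    MapsTo (hexRotation c) (closedHexagon c) (closedHexagon c) := fun p ⟨h₁, h₂, h₃⟩ =>
  ⟨h₂, by rwa [hexRotation, add_sub_cancel_right, abs_sub_comm],
    by rwa [hexRotation, ← sub_sub, sub_sub_cancel]⟩

theorem hexRotation_center (c : ℝ) : hexRotation c (c, c) = (c, c) := by
  simp [hexRotation]

theorem isPeriodicPt_hexRotation (c : ℝ) (p : ℝ × ℝ) : IsPeriodicPt (hexRotation c) 6 p :=
  Prod.ext (by simp only [iterate_succ_apply, iterate_zero_apply, hexRotation]; ring)
    (by simp only [iterate_succ_apply, iterate_zero_apply, hexRotation]; ring)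

theorem not_isPeriodicPt_hexRotation_two (hp : p ≠ (c, c)) :
    ¬IsPeriodicPt (hexRotation c) 2 p := fun h => by
  have h₁ : p.2 - p.1 + c = p.1 := congrArg Prod.fst h
  have h₂ : p.2 - p.1 + c - p.2 + c = p.2 := congrArg Prod.snd h
  exact hp (Prod.ext (by linarith) (by linarith))

theorem not_isPeriodicPt_hexRotation_three (hp : p ≠ (c, c)) :
    ¬IsPeriodicPt (hexRotation c) 3 p := fun h => by
  have h₁ : p.2 - p.1 + c - p.2 + c = p.1 := congrArg Prod.fst h
  have h₂ : p.2 - p.1 + c - p.2 + c - (p.2 - p.1 + c) + c = p.2 := congrArg Prod.snd h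
  exact hp (Prod.ext (by linarith) (by linarith))

theorem minimalPeriod_hexRotation_center (c : ℝ) : minimalPeriod (hexRotation c) (c, c) = 1 :=
  minimalPeriod_eq_one_iff_isFixedPt.2 (hexRotation_center c)

theorem minimalPeriod_hexRotation (hp : p ≠ (c, c)) : minimalPeriod (hexRotation c) p = 6 :=
  minimalPeriod_eq_of_dvd_six_pow (m := 1) (by norm_num) (isPeriodicPt_hexRotation c p)
    (fun _ => not_isPeriodicPt_hexRotation_three hp)
    fun _ => not_isPeriodicPt_hexRotation_two hp

theorem hexRotation_injective (c : ℝ) : Injective (hexRotation c) := fun p q h => by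
  have h₁ : p.2 = q.2 := congrArg Prod.fst h
  have h₂ : p.2 - p.1 + c = q.2 - q.1 + c := congrArg Prod.snd h
  exact Prod.ext (by linarith) h₁

end HexRotation

section LatticeCoordinates

/-- The map `F` in the coordinates `latticeCoord`. -/
noncomputable def latticeMap (p : ℝ × ℝ) : ℝ × ℝ :=
  hexRotation (s p.2) p

/-- The coordinates `(x + y / √3, 2 y / √3)`, for which the lattice of the grid is `(2ℤ)²`. -/
noncomputable def latticeCoord : ℝ × ℝ ≃ ℝ × ℝ where
  toFun q := (q.1 + q.2 / √3, 2 * (q.2 / √3))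
  invFun p := (p.1 - p.2 / 2, √3 * (p.2 / 2))
  left_inv q := Prod.ext (by simp) (by field_simp)
  right_inv p := Prod.ext (by field_simp; simp) (by field_simp)

/-- The grid in the coordinates `latticeCoord`. -/
def latticeGrid : Set (ℝ × ℝ) :=
  {p | (∃ k : ℤ, p.1 - p.2 = 2 * k + 1) ∨ (∃ l : ℤ, p.2 = 2 * l) ∨ ∃ m : ℤ, p.1 = 2 * m}

theorem latticeCoord_F (q : ℝ × ℝ) : latticeCoord (F q) = latticeMap (latticeCoord q) := by
  have hs : s (2 * (q.2 / √3)) = s q.2 := by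
    have h : 0 ≤ 2 * (q.2 / √3) ↔ 0 ≤ q.2 := by
      rw [mul_nonneg_iff_of_pos_left two_pos, le_div_iff₀ (by positivity), zero_mul]
    simp only [s, h]
  have h3 : √3 ^ 2 = 3 := Real.sq_sqrt (by norm_num)
  refine Prod.ext ?_ ?_ <;>
    simp only [latticeCoord, latticeMap, hexRotation, F, Equiv.coe_fn_mk, hs] <;> field_simp
  · linear_combination q.2 * h3
  · ring

theorem minimalPeriod_latticeCoord (q : ℝ × ℝ) :
    minimalPeriod latticeMap (latticeCoord q) = minimalPeriod F q :=
  minimalPeriod_of_semiconjOn (mapsTo_univ _ _) latticeCoord.injective.injOn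
    (fun q _ => (latticeCoord_F q).symm) (mem_univ q)

theorem latticeCoord_mem_latticeGrid {q : ℝ × ℝ} (hq : q ∈ grid) :
    latticeCoord q ∈ latticeGrid := by
  obtain ⟨k, h⟩ | ⟨l, h⟩ | ⟨m, h⟩ := hq
  · exact Or.inl ⟨k, by simp only [latticeCoord, Equiv.coe_fn_mk, h]; field_simp; ring⟩
  · exact Or.inr (Or.inl ⟨l, by simp only [latticeCoord, Equiv.coe_fn_mk, h]; field_simp⟩)
  · exact Or.inr (Or.inr ⟨m, by simp only [latticeCoord, Equiv.coe_fn_mk, h]; field_simp; ring⟩)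

variable {p : ℝ × ℝ}

theorem latticeMap_of_nonneg (hp : 0 ≤ p.2) : latticeMap p = hexRotation 1 p := by
  rw [latticeMap, s, if_pos hp]

theorem latticeMap_of_neg (hp : p.2 < 0) : latticeMap p = hexRotation (-1) p := by
  rw [latticeMap, s, if_neg hp.not_ge]

theorem latticeMap_injective : Injective latticeMap := fun p q h => by
  have h₁ : p.2 = q.2 := congrArg Prod.fst h
  rw [latticeMap, latticeMap, h₁] at h
  exact hexRotation_injective _ h

theorem mapsTo_latticeMap_latticeGrid : MapsTo latticeMap latticeGrid latticeGrid := by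
  rintro p (⟨k, h⟩ | ⟨l, h⟩ | ⟨m, h⟩)
  · right; left
    rcases le_or_gt 0 p.2 with hp | hp
    · exact ⟨-k, by rw [latticeMap_of_nonneg hp, hexRotation]; push_cast; linarith⟩
    · exact ⟨-k - 1, by rw [latticeMap_of_neg hp, hexRotation]; push_cast; linarith⟩
  · exact Or.inr (Or.inr ⟨l, h⟩)
  · left
    rcases le_or_gt 0 p.2 with hp | hp
    · exact ⟨m - 1, by rw [latticeMap_of_nonneg hp, hexRotation]; push_cast; linarith⟩
    · exact ⟨m, by rw [latticeMap_of_neg hp, hexRotation]; push_cast; linarith⟩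

/-- The two hexagons about the points `(1, 1)` and `(-1, -1)` on which `latticeMap` is a rotation
of order six. -/
def core : Set (ℝ × ℝ) :=
  closedHexagon 1 ∪ openHexagon (-1)

theorem eqOn_latticeMap_closedHexagon : EqOn latticeMap (hexRotation 1) (closedHexagon 1) :=
  fun _ hp => latticeMap_of_nonneg (by linarith [(abs_le.1 hp.2.1).1])

theorem eqOn_latticeMap_openHexagon : EqOn latticeMap (hexRotation (-1)) (openHexagon (-1)) :=
  fun _ hp => latticeMap_of_neg (by linarith [(abs_lt.1 hp.2.1).2])

theorem notMem_latticeGrid_of_odd (k : ℤ) : ((2 * k + 1, 2 * k + 1) : ℝ × ℝ) ∉ latticeGrid := by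
  rintro (⟨l, h⟩ | ⟨l, h⟩ | ⟨l, h⟩) <;> simp only at h <;> norm_cast at h <;> omega

theorem minimalPeriod_latticeMap_of_mem_core (hp : p ∈ core) :
    minimalPeriod latticeMap p = 6 ∨ minimalPeriod latticeMap p = 1 ∧ p ∉ latticeGrid := by
  rcases hp with hp | hp
  · rw [minimalPeriod_of_eqOn (mapsTo_hexRotation_closedHexagon 1) eqOn_latticeMap_closedHexagon hp]
    rcases eq_or_ne p (1, 1) with rfl | hne
    · exact .inr ⟨minimalPeriod_hexRotation_center 1, by simpa using notMem_latticeGrid_of_odd 0⟩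
    · exact .inl (minimalPeriod_hexRotation hne)
  · rw [minimalPeriod_of_eqOn (mapsTo_hexRotation_openHexagon (-1)) eqOn_latticeMap_openHexagon hp]
    rcases eq_or_ne p (-1, -1) with rfl | hne
    · exact .inr ⟨minimalPeriod_hexRotation_center (-1), by
        convert notMem_latticeGrid_of_odd (-1) using 2; norm_num⟩
    · exact .inl (minimalPeriod_hexRotation hne)

end LatticeCoordinates

section ReturnSection

/-- The part of the square `[-2, 2) × [-2, 2)` over which the section has a level `-1`. -/
def lowRegion : Set (ℝ × ℝ) :=
  {p | p.2 ≤ 0 ∧ p.1 + 1 < p.2 ∨ 0 < p.2 ∧ (p.1 ≤ 0 ∨ p.1 + 1 ≤ p.2)}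

/-- The parameters of the section: a point of the square `[-2, 2) × [-2, 2)` and a level. -/
def admissible : Set ((ℝ × ℝ) × ℤ) :=
  {x | (x.1.1 ∈ Ico (-2) 2 ∧ x.1.2 ∈ Ico (-2) 2) ∧ (0 ≤ x.2 ∨ x.2 = -1 ∧ x.1 ∈ lowRegion)}

theorem neg_one_le_of_mem_admissible {x : (ℝ × ℝ) × ℤ} (hx : x ∈ admissible) : -1 ≤ x.2 :=
  hx.2.elim (by omega) fun h => h.1.ge

theorem nonneg_of_mem_admissible {x : (ℝ × ℝ) × ℤ} (hx : x ∈ admissible)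
    (hlow : x.1 ∉ lowRegion) : 0 ≤ x.2 :=
  hx.2.resolve_right fun h => hlow h.2

/-- The first return map of `latticeMap` to the section, in the parameters `admissible`: on the
square it is `hexRotation (±1)` taken modulo `4`, and the level counts the reductions. -/
noncomputable def squareMap (x : (ℝ × ℝ) × ℤ) : (ℝ × ℝ) × ℤ :=
  if 0 < x.1.2 then
    if x.1.2 - x.1.1 + 1 < 2 then (hexRotation 1 x.1, x.2) else (hexRotation (-3) x.1, x.2 + 1)
  else
    if -2 ≤ x.1.2 - x.1.1 - 1 then (hexRotation (-1) x.1, x.2)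
    else (hexRotation 3 x.1, x.2 - 1)

/-- The point of the plane with parameter `x`. The part `b ≤ 0` of level `-1` lies two units further
right than the rest of the section. -/
noncomputable def embed (x : (ℝ × ℝ) × ℤ) : ℝ × ℝ :=
  (if 0 ≤ x.2 ∨ 0 < x.1.2 then x.1.1 - 2 else x.1.1, 4 * x.2 + x.1.2 + 2)

/-- The section, which is the image of `admissible` under `embed`, by inequalities. -/
def returnSection : Set (ℝ × ℝ) :=
  {p | (-4 ≤ p.1 ∧ p.1 < 0 ∧ (0 ≤ p.2 ∨ -2 < p.2 ∧ (p.1 ≤ -2 ∨ p.1 + 1 ≤ p.2))) ∨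
    (-2 ≤ p.1 ∧ p.2 ≤ -2 ∧ p.1 - 1 < p.2)}

variable {a b : ℝ} {j : ℤ}

theorem squareMap_fst_fst (x : (ℝ × ℝ) × ℤ) : (squareMap x).1.1 = x.1.2 := by
  unfold squareMap
  split_ifs <;> rfl

theorem squareMap_stay_of_pos (h : 0 < b) (h' : b < a + 1) :
    squareMap ((a, b), j) = ((b, b - a + 1), j) := by
  rw [squareMap, if_pos h, if_pos (by linarith), hexRotation]

theorem squareMap_up (h : 0 < b) (h' : a + 1 ≤ b) :
    squareMap ((a, b), j) = ((b, b - a - 3), j + 1) := by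
  rw [squareMap, if_pos h, if_neg (by linarith), hexRotation, ← sub_eq_add_neg]

theorem squareMap_stay_of_nonpos (h : b ≤ 0) (h' : a ≤ b + 1) :
    squareMap ((a, b), j) = ((b, b - a - 1), j) := by
  rw [squareMap, if_neg h.not_gt, if_pos (by linarith), hexRotation, ← sub_eq_add_neg]

theorem squareMap_down (h : b ≤ 0) (h' : b + 1 < a) :
    squareMap ((a, b), j) = ((b, b - a + 3), j - 1) := by
  rw [squareMap, if_neg h.not_gt, if_neg (by linarith), hexRotation]

theorem embed_of_nonneg (h : 0 ≤ j ∨ 0 < b) : embed ((a, b), j) = (a - 2, 4 * j + b + 2) := by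
  rw [embed, if_pos h]

theorem embed_of_neg (h : j < 0) (h' : b ≤ 0) : embed ((a, b), j) = (a, 4 * j + b + 2) := by
  rw [embed, if_neg (by simp [h, h'])]

theorem mapsTo_squareMap_admissible : MapsTo squareMap admissible admissible := by
  rintro ⟨⟨a, b⟩, j⟩ ⟨⟨⟨h₁, h₂⟩, h₃, h₄⟩, hj⟩
  simp only [lowRegion, mem_ofPred_eq] at h₁ h₂ h₃ h₄ hj
  rcases lt_or_ge 0 b with hb | hb
  · rcases lt_or_ge b (a + 1) with hab | hab
    · rw [squareMap_stay_of_pos hb hab]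
      refine ⟨⟨⟨h₃, h₄⟩, by linarith, by linarith⟩, hj.imp_right (And.imp_right ?_)⟩
      exact fun h => .inr ⟨by grind, .inr (by grind)⟩
    · rw [squareMap_up hb hab]
      exact ⟨⟨⟨h₃, h₄⟩, by linarith, by linarith⟩, .inl (by grind)⟩
  · rcases le_or_gt a (b + 1) with hab | hab
    · rw [squareMap_stay_of_nonpos hb hab]
      refine ⟨⟨⟨h₃, h₄⟩, by linarith, by linarith⟩, hj.imp_right (And.imp_right ?_)⟩
      exact fun h => .inr ⟨by grind, .inl hb⟩
    · rw [squareMap_down hb hab]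
      refine ⟨⟨⟨h₃, h₄⟩, by linarith, by linarith⟩, ?_⟩
      simp only [lowRegion, mem_ofPred_eq]
      grind

theorem mapsTo_embed_returnSection : MapsTo embed admissible returnSection := by
  rintro ⟨⟨a, b⟩, j⟩ ⟨⟨⟨h₁, h₂⟩, h₃, h₄⟩, h | ⟨rfl, h⟩⟩ <;> simp only at h₁ h₂ h₃ h₄ h
  · rw [embed_of_nonneg (.inl h)]
    have : (0 : ℝ) ≤ j := by exact_mod_cast h
    exact .inl ⟨by linarith, by linarith, .inl (by simp only; linarith)⟩
  · rcases h with ⟨hb, hab⟩ | ⟨hb, hab⟩ <;> simp only at hb hab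
    · rw [embed_of_neg (by norm_num) hb]
      exact .inr ⟨h₁, by push_cast; linarith, by push_cast; linarith⟩
    · rw [embed_of_nonneg (.inr hb)]
      refine .inl ⟨by linarith, by linarith, .inr ⟨by push_cast; linarith, ?_⟩⟩
      exact hab.imp (fun h => by linarith) fun h => by push_cast; linarith

theorem surjOn_embed_returnSection : SurjOn embed admissible returnSection := by
  rintro ⟨u, v⟩ (⟨h₁, h₂, h⟩ | ⟨h₁, h₂, h₃⟩) <;> simp only at *
  · rcases le_or_gt 0 v with hv | hv
    · have hj : 0 ≤ ⌊v / 4⌋ := Int.floor_nonneg.2 (by positivity)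
      have hle := Int.floor_le (v / 4)
      have hlt := Int.lt_floor_add_one (v / 4)
      refine ⟨((u + 2, v - 4 * ⌊v / 4⌋ - 2), ⌊v / 4⌋),
        ⟨⟨⟨by linarith, by linarith⟩, by linarith, by linarith⟩, .inl hj⟩, ?_⟩
      rw [embed_of_nonneg (.inl hj)]
      ring_nf
    · obtain ⟨hv', huv⟩ := h.resolve_left hv.not_ge
      refine ⟨((u + 2, v + 2), -1), ⟨⟨⟨by linarith, by linarith⟩, by linarith, by linarith⟩,
        .inr ⟨rfl, .inr ⟨by linarith, huv.imp (fun h => ?_) fun h => ?_⟩⟩⟩, ?_⟩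
      · linarith
      · linarith
      · rw [embed_of_nonneg (.inr (by linarith))]
        push_cast
        ring_nf
  · refine ⟨((u, v + 2), -1), ⟨⟨⟨h₁, by linarith⟩, by linarith, by linarith⟩,
      .inr ⟨rfl, .inl ⟨by linarith, by linarith⟩⟩⟩, ?_⟩
    rw [embed_of_neg (by norm_num) (by linarith)]
    push_cast
    ring_nf

theorem injOn_embed : InjOn embed admissible := by
  rintro ⟨⟨a, b⟩, j⟩ ⟨⟨-, h₁, h₂⟩, -⟩ ⟨⟨a', b'⟩, j'⟩ ⟨⟨-, h₁', h₂'⟩, -⟩ h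
  simp only at h₁ h₂ h₁' h₂'
  have hv : 4 * (j : ℝ) + b + 2 = 4 * j' + b' + 2 := congrArg Prod.snd h
  obtain rfl : j = j' := by
    have hlt : (j : ℝ) < j' + 1 := by linarith
    have hlt' : (j' : ℝ) < j + 1 := by linarith
    norm_cast at hlt hlt'
    omega
  obtain rfl : b = b' := by linarith
  have hu := congrArg Prod.fst h
  simp only [embed] at hu
  obtain rfl : a = a' := by split_ifs at hu <;> linarith
  rfl

end ReturnSection

section FirstReturnToSection

variable {u v a b : ℝ} {n : ℕ} {q : ℝ × ℝ}

/-- Orbit segments of `latticeMap` not meeting `returnSection` strictly in between. -/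
abbrev Reaches (n : ℕ) (p q : ℝ × ℝ) : Prop :=
  ReachesAvoiding latticeMap returnSection n p q

namespace Reaches

theorem last_neg (hv : v < 0 := by linarith) : Reaches 1 (u, v) (v, v - u - 1) :=
  .of_apply_eq (by rw [latticeMap_of_neg hv, hexRotation, ← sub_eq_add_neg])

theorem last_pos (hv : 0 ≤ v := by linarith) : Reaches 1 (u, v) (v, v - u + 1) :=
  .of_apply_eq (by rw [latticeMap_of_nonneg hv, hexRotation])

theorem neg (h : Reaches n (v, v - u - 1) q) (hv : v < 0 := by linarith)
    (hS : (v, v - u - 1) ∉ returnSection := by grind [returnSection]) : Reaches (1 + n) (u, v) q :=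
  (last_neg hv).trans hS h

theorem pos (h : Reaches n (v, v - u + 1) q) (hv : 0 ≤ v := by linarith)
    (hS : (v, v - u + 1) ∉ returnSection := by grind [returnSection]) : Reaches (1 + n) (u, v) q :=
  (last_pos hv).trans hS h

theorem congr {u' v' : ℝ} (h : Reaches n (u, v) (a, b)) (hu : a = u' := by ring)
    (hv : b = v' := by ring) : Reaches n (u, v) (u', v') :=
  hu ▸ hv ▸ h

end Reaches

theorem reaches_sub_four (hu : u < 0) (hv : 4 ≤ v) : Reaches 6 (u, v) (u - 4, v - 4) :=
  .congr <| .pos <| .pos <| .pos <| .neg <| .neg <| .last_neg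

theorem reaches_of_two_lt (hu : u < 0) (hv : 2 < v) (hv' : v < 4) :
    Reaches 7 (u, v) (v - 4, v - u - 1) :=
  .congr <| .pos <| .pos <| .pos <| .neg <| .neg <| .neg <| .last_neg

theorem reaches_of_le_two (hu : u < v - 1) (hu' : u < 0) (hv : 0 ≤ v) (hv' : v ≤ 2) :
    Reaches 7 (u, v) (v - 4, v - u - 3) :=
  .congr <| .pos <| .pos <| .pos <| .pos <| .neg <| .neg <| .last_neg

theorem reaches_of_sub_one_le (hu : v - 1 ≤ u) (hu' : u < 0) (hv : 0 ≤ v) :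
    Reaches 7 (u, v) (v - 2, v - u - 3) :=
  .congr <| .pos <| .pos <| .pos <| .pos <| .pos <| .neg <| .last_neg

theorem reaches_of_reaches_sub_four_mul (hu : u < 0) (hv : 0 ≤ v) (m : ℕ)
    (h : Reaches n (u - 4 * m, v) q) : Reaches (6 * m + n) (u, v + 4 * m) q := by
  induction m generalizing u with
  | zero => simpa using h
  | succ m ih =>
    have : (0 : ℝ) ≤ m := m.cast_nonneg
    have hdescend : Reaches 6 (u, v + 4 * ↑(m + 1)) (u - 4, v + 4 * m) :=
      (reaches_sub_four hu (by push_cast; linarith)).congr rfl (by push_cast; ring)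
    rw [mul_add_one, add_right_comm, add_comm]
    refine hdescend.trans (by grind [returnSection]) (ih (by linarith) ?_)
    convert h using 2
    push_cast
    ring

theorem reaches_embed_of_level_neg_one {p : ℝ × ℝ} (hp : p ∈ lowRegion) (hp' : p.2 < 2) :
    Reaches 1 (embed (p, -1)) (embed (squareMap (p, -1))) := by
  obtain ⟨a, b⟩ := p
  rcases hp with ⟨hb, hab⟩ | ⟨hb, hab⟩ <;> simp only at hb hab hp'
  · rw [embed_of_neg (by norm_num) hb, squareMap_stay_of_nonpos hb (by linarith),
      embed_of_nonneg (.inr (by linarith))]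
    exact .congr (.last_neg (by push_cast; linarith)) (by push_cast; ring) (by push_cast; ring)
  · rw [embed_of_nonneg (.inr hb)]
    rcases lt_or_ge b (a + 1) with hba | hba
    · rw [squareMap_stay_of_pos hb hba,
        embed_of_nonneg (.inr (by linarith [hab.resolve_right hba.not_ge]))]
      exact .congr (.last_neg (by push_cast; linarith)) (by push_cast; ring) (by push_cast; ring)
    · rw [squareMap_up hb hba, embed_of_nonneg (.inl (by norm_num))]
      exact .congr (.last_neg (by push_cast; linarith)) (by push_cast; ring) (by push_cast; ring)

theorem reaches_embed_of_pos (ha : a < 2) (hb : 0 < b) (hb' : b < 2) (m : ℕ) :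
    Reaches 7 (a - 2 - 4 * m, b + 2) (embed (squareMap ((a, b), m))) := by
  have : (0 : ℝ) ≤ m := m.cast_nonneg
  have h := reaches_of_two_lt (u := a - 2 - 4 * m) (v := b + 2) (by linarith) (by linarith)
    (by linarith)
  rcases lt_or_ge b (a + 1) with hba | hba
  · rw [squareMap_stay_of_pos hb hba, embed_of_nonneg (.inl m.cast_nonneg)]
    exact h.congr (by ring) (by push_cast; ring)
  · rw [squareMap_up hb hba, embed_of_nonneg (.inl (by positivity))]
    exact h.congr (by ring) (by push_cast; ring)

theorem reaches_embed_of_nonpos (ha : a < 2) (hb : -2 ≤ b) (hb' : b ≤ 0) (m : ℕ) :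
    Reaches 7 (a - 2 - 4 * m, b + 2) (embed (squareMap ((a, b), m))) := by
  have hm : (0 : ℝ) ≤ m := m.cast_nonneg
  rcases le_or_gt a (b + 1) with hab | hab
  · rw [squareMap_stay_of_nonpos hb' hab, embed_of_nonneg (.inl m.cast_nonneg)]
    exact (reaches_of_le_two (by linarith) (by linarith) (by linarith) (by linarith)).congr
      (by ring) (by push_cast; ring)
  rw [squareMap_down hb' hab]
  rcases lt_or_ge (a - 2 - 4 * m) (b + 1) with h | h
  · rw [embed_of_nonneg]
    · exact (reaches_of_le_two (by linarith) (by linarith) (by linarith) (by linarith)).congr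
        (by ring) (by push_cast; ring)
    · rcases m.eq_zero_or_pos with rfl | hpos
      · exact .inr (by rw [Nat.cast_zero] at h; linarith)
      · exact .inl (by omega)
  · obtain rfl : m = 0 := by
      have hlt : (m : ℝ) < 1 := by linarith
      exact Nat.lt_one_iff.1 (by exact_mod_cast hlt)
    simp only [Nat.cast_zero, mul_zero, sub_zero] at h ⊢
    rw [embed_of_neg (by norm_num) (by linarith)]
    exact (reaches_of_sub_one_le (by linarith) (by linarith) (by linarith)).congr
      (by ring) (by push_cast; ring)

/-- The time of the first return to the section. -/
def returnTime (x : (ℝ × ℝ) × ℤ) : ℕ :=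
  (6 * x.2 + 7).toNat

theorem reaches_embed {x : (ℝ × ℝ) × ℤ} (hx : x ∈ admissible) :
    Reaches (returnTime x) (embed x) (embed (squareMap x)) := by
  obtain ⟨⟨a, b⟩, j⟩ := x
  obtain ⟨⟨⟨-, ha⟩, hb, hb'⟩, hj | ⟨rfl, h⟩⟩ := hx
  · simp only at ha hb hb' hj
    lift j to ℕ using hj with m
    have htime : returnTime ((a, b), m) = 6 * m + 7 := by
      rw [returnTime]
      omega
    have hembed : embed ((a, b), m) = (a - 2, b + 2 + 4 * m) := by
      rw [embed_of_nonneg (.inl m.cast_nonneg)]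
      push_cast
      ring_nf
    rw [htime, hembed]
    refine reaches_of_reaches_sub_four_mul (by linarith) (by linarith) m ?_
    rcases lt_or_ge 0 b with h | h
    · exact reaches_embed_of_pos ha h hb' m
    · exact reaches_embed_of_nonpos ha hb h m
  · exact reaches_embed_of_level_neg_one h hb'

theorem isFirstReturn_squareMap :
    IsFirstReturn latticeMap returnSection admissible embed squareMap returnTime where
  mapsTo := mapsTo_squareMap_admissible
  mapsTo_section := mapsTo_embed_returnSection
  injOn := injOn_embed
  time_pos x hx := by
    have := neg_one_le_of_mem_admissible hx
    rw [returnTime]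
    omega
  reachesAvoiding _ := reaches_embed

end FirstReturnToSection

section Reaching

variable {u v : ℝ} {p : ℝ × ℝ}

/-- The points whose orbit under `latticeMap` meets `returnSection`. -/
def sectionBasin : Set (ℝ × ℝ) :=
  {p | ∃ n, latticeMap^[n] p ∈ returnSection}

theorem mem_sectionBasin_of_nonneg (h : (v, v - u + 1) ∈ sectionBasin)
    (hv : 0 ≤ v := by linarith) : (u, v) ∈ sectionBasin := by
  obtain ⟨n, hn⟩ := h
  refine ⟨n + 1, ?_⟩
  rwa [iterate_succ_apply, latticeMap_of_nonneg hv]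

theorem mem_sectionBasin_of_neg (h : (v, v - u - 1) ∈ sectionBasin)
    (hv : v < 0 := by linarith) : (u, v) ∈ sectionBasin := by
  obtain ⟨n, hn⟩ := h
  refine ⟨n + 1, ?_⟩
  rwa [iterate_succ_apply, latticeMap_of_neg hv]

theorem mem_sectionBasin_of_neg_of_nonneg (hu : u < 0) (hv : 0 ≤ v) :
    (u, v) ∈ sectionBasin := by
  obtain ⟨m, v₀, hv₀, hv₀', rfl⟩ : ∃ (m : ℕ) (v₀ : ℝ), 0 ≤ v₀ ∧ v₀ < 4 ∧ v = v₀ + 4 * m := by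
    refine ⟨⌊v / 4⌋₊, v - 4 * ⌊v / 4⌋₊, ?_, ?_, by ring⟩
    · linarith [Nat.floor_le (a := v / 4) (by positivity)]
    · linarith [Nat.lt_floor_add_one (v / 4)]
  have hm : (0 : ℝ) ≤ m := m.cast_nonneg
  suffices h : ∃ q ∈ returnSection, Reaches 7 (u - 4 * m, v₀) q by
    obtain ⟨q, hq, h⟩ := h
    exact ⟨6 * m + 7, (reaches_of_reaches_sub_four_mul hu hv₀ m h).iterate_eq ▸ hq⟩
  rcases lt_or_ge 2 v₀ with h₂ | h₂
  · exact ⟨_, by grind [returnSection], reaches_of_two_lt (by linarith) h₂ hv₀'⟩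
  rcases lt_or_ge (u - 4 * m) (v₀ - 1) with h₁ | h₁
  · exact ⟨_, by grind [returnSection], reaches_of_le_two h₁ (by linarith) hv₀ h₂⟩
  · exact ⟨_, by grind [returnSection], reaches_of_sub_one_le h₁ (by linarith) hv₀⟩

theorem mem_sectionBasin_of_le_sub_one (hv : v < 0) (hu : u ≤ v - 1) :
    (u, v) ∈ sectionBasin :=
  mem_sectionBasin_of_neg <| mem_sectionBasin_of_neg_of_nonneg hv (by linarith)

theorem mem_sectionBasin_of_neg_of_notMem (hv : v < 0) (h : (u, v) ∉ openHexagon (-1)) :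
    (u, v) ∈ sectionBasin := by
  rcases le_or_gt u (v - 1) with h₀ | h₀
  · exact mem_sectionBasin_of_le_sub_one hv h₀
  refine mem_sectionBasin_of_neg ?_
  rcases le_or_gt 0 (v - u - 1) with hw | hw
  · exact mem_sectionBasin_of_neg_of_nonneg hv hw
  rcases le_or_gt u (-2) with h₁ | h₁
  · exact mem_sectionBasin_of_le_sub_one hw (by linarith)
  refine mem_sectionBasin_of_neg ?_
  rcases le_or_gt v (-2) with h₂ | h₂
  · exact mem_sectionBasin_of_le_sub_one (by linarith) (by linarith)
  refine mem_sectionBasin_of_neg ?_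
  rcases le_or_gt (v + 1) u with h₃ | h₃
  · exact mem_sectionBasin_of_le_sub_one (by linarith) (by linarith)
  refine mem_sectionBasin_of_neg ?_
  rcases le_or_gt 0 u with h₄ | h₄
  · exact mem_sectionBasin_of_le_sub_one (by linarith) (by linarith)
  · exact absurd ⟨abs_lt.2 ⟨by grind, by grind⟩, abs_lt.2 ⟨by grind, by grind⟩,
      abs_lt.2 ⟨by grind, by grind⟩⟩ h

theorem mem_sectionBasin_of_nonneg_of_notMem (hu : 0 ≤ u) (hv : 0 ≤ v)
    (h : (u, v) ∉ closedHexagon 1) : (u, v) ∈ sectionBasin := by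
  have hneg {x y : ℝ} (hx : 0 ≤ x) (hy : y < 0) : (x, y) ∈ sectionBasin :=
    mem_sectionBasin_of_neg_of_notMem hy fun h => by
      linarith [(abs_lt.1 h.1).2, show (x, y).1 = x from rfl]
  rcases lt_or_ge v (u - 1) with h₁ | h₁
  · exact mem_sectionBasin_of_nonneg (hneg hv (by linarith))
  rcases lt_or_ge 2 u with h₂ | h₂
  · exact mem_sectionBasin_of_nonneg <| mem_sectionBasin_of_nonneg <|
      hneg (by linarith) (by linarith)
  rcases lt_or_ge 2 v with h₃ | h₃
  · exact mem_sectionBasin_of_nonneg <| mem_sectionBasin_of_nonneg <|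
      mem_sectionBasin_of_nonneg <| hneg (by linarith) (by linarith)
  rcases lt_or_ge u (v - 1) with h₄ | h₄
  · exact mem_sectionBasin_of_nonneg <| mem_sectionBasin_of_nonneg <|
      mem_sectionBasin_of_nonneg <| mem_sectionBasin_of_nonneg <|
      hneg (by linarith) (by linarith)
  · exact absurd ⟨abs_le.2 ⟨by grind, by grind⟩, abs_le.2 ⟨by grind, by grind⟩,
      abs_le.2 ⟨by grind, by grind⟩⟩ h

theorem exists_iterate_eq_embed (hp : p ∉ core) :
    ∃ n, ∃ x ∈ admissible, latticeMap^[n] p = embed x := by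
  suffices p ∈ sectionBasin by
    obtain ⟨n, hn⟩ := this
    obtain ⟨x, hx, hxn⟩ := surjOn_embed_returnSection hn
    exact ⟨n, x, hx, hxn.symm⟩
  obtain ⟨hc, ho⟩ := not_or.1 hp
  rcases lt_or_ge p.2 0 with hv | hv
  · exact mem_sectionBasin_of_neg_of_notMem hv ho
  rcases lt_or_ge p.1 0 with hu | hu
  · exact mem_sectionBasin_of_neg_of_nonneg hu hv
  · exact mem_sectionBasin_of_nonneg_of_notMem hu hv hc

end Reaching

section SquarePath

variable {a b : ℝ} {j : ℤ} {k l m : ℕ} {t t' : ℤ} {x y z : (ℝ × ℝ) × ℤ}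

/-- The first return map takes `x` to `y` in `k` returns, with return times adding up to `t`. -/
structure SquarePath (k : ℕ) (t : ℤ) (x y : (ℝ × ℝ) × ℤ) : Prop where
  iterate_eq : squareMap^[k] x = y
  birkhoffSum_eq : birkhoffSum squareMap (fun z => 6 * z.2 + 7) k x = t

namespace SquarePath

theorem refl (x : (ℝ × ℝ) × ℤ) : SquarePath 0 0 x x :=
  ⟨rfl, rfl⟩

theorem trans (h : SquarePath k t x y) (h' : SquarePath l t' y z) :
    SquarePath (k + l) (t + t') x z where
  iterate_eq := by rw [add_comm, iterate_add_apply, h.iterate_eq, h'.iterate_eq]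
  birkhoffSum_eq := by rw [birkhoffSum_add, h.birkhoffSum_eq, h.iterate_eq, h'.birkhoffSum_eq]

theorem of_squareMap_eq (h : squareMap x = y) (h' : SquarePath k t y z) :
    SquarePath (k + 1) (6 * x.2 + 7 + t) x z where
  iterate_eq := by rw [iterate_succ_apply, h, h'.iterate_eq]
  birkhoffSum_eq := by rw [birkhoffSum_succ', h, h'.birkhoffSum_eq]

theorem stay_of_pos (h : SquarePath k t ((b, b - a + 1), j) y) (hb : 0 < b := by linarith)
    (hba : b < a + 1 := by linarith) : SquarePath (k + 1) (6 * j + 7 + t) ((a, b), j) y :=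
  of_squareMap_eq (squareMap_stay_of_pos hb hba) h

theorem up (h : SquarePath k t ((b, b - a - 3), j + 1) y) (hb : 0 < b := by linarith)
    (hab : a + 1 ≤ b := by linarith) : SquarePath (k + 1) (6 * j + 7 + t) ((a, b), j) y :=
  of_squareMap_eq (squareMap_up hb hab) h

theorem stay_of_nonpos (h : SquarePath k t ((b, b - a - 1), j) y) (hb : b ≤ 0 := by linarith)
    (hab : a ≤ b + 1 := by linarith) : SquarePath (k + 1) (6 * j + 7 + t) ((a, b), j) y :=
  of_squareMap_eq (squareMap_stay_of_nonpos hb hab) h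

theorem down (h : SquarePath k t ((b, b - a + 3), j - 1) y) (hb : b ≤ 0 := by linarith)
    (hba : b + 1 < a := by linarith) : SquarePath (k + 1) (6 * j + 7 + t) ((a, b), j) y :=
  of_squareMap_eq (squareMap_down hb hba) h

theorem congr {a' b' : ℝ} {j' : ℤ} (h : SquarePath k t x ((a, b), j)) (ht : t = t' := by ring)
    (ha : a = a' := by ring) (hb : b = b' := by ring) (hj : j = j' := by ring) :
    SquarePath k t' x ((a', b'), j') :=
  ht ▸ ha ▸ hb ▸ hj ▸ h

theorem mem_admissible (h : SquarePath k t x y) (hx : x ∈ admissible) : y ∈ admissible :=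
  h.iterate_eq ▸ mapsTo_squareMap_admissible.iterate k hx

theorem minimalPeriod_embed (h : SquarePath k t x y) (hx : x ∈ admissible)
    (hk : minimalPeriod squareMap x = k) : (minimalPeriod latticeMap (embed x) : ℤ) = t := by
  rw [isFirstReturn_squareMap.minimalPeriod_eq_birkhoffSum hx, hk, ← h.birkhoffSum_eq,
    birkhoffSum, birkhoffSum, Nat.cast_sum]
  refine Finset.sum_congr rfl fun i _ => Int.toNat_of_nonneg ?_
  have := neg_one_le_of_mem_admissible (mapsTo_squareMap_admissible.iterate i hx)
  omega

theorem minimalPeriod_embed_of_dvd_six_pow (h : SquarePath k t x x) (hx : x ∈ admissible)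
    (hk : k ∣ 6 ^ m) (h₂ : 2 ∣ k → squareMap^[k / 2] x ≠ x)
    (h₃ : 3 ∣ k → squareMap^[k / 3] x ≠ x) : (minimalPeriod latticeMap (embed x) : ℤ) = t :=
  h.minimalPeriod_embed hx (minimalPeriod_eq_of_dvd_six_pow hk h.iterate_eq h₂ h₃)

end SquarePath

end SquarePath

section Cells

variable {j : ℤ} {p : ℝ × ℝ}

theorem minimalPeriod_embed_of_eq_hexRotation {T : Set (ℝ × ℝ)} {c : ℝ}
    (hT : MapsTo (hexRotation c) T T)
    (h : ∀ p ∈ T, ∀ j : ℤ, squareMap (p, j) = (hexRotation c p, j)) (hp : p ∈ T)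
    (hx : (p, j) ∈ admissible) : (minimalPeriod latticeMap (embed (p, j)) : ℤ) =
      minimalPeriod (hexRotation c) p * (6 * j + 7) := by
  have hpath (n : ℕ) :
      SquarePath n (n * (6 * j + 7)) (p, j) ((hexRotation c)^[n] p, j) := by
    induction n with
    | zero => simpa using SquarePath.refl (p, j)
    | succ n ih =>
      have hstep := ih.trans (.of_squareMap_eq (h _ (hT.iterate n hp) j) (.refl _))
      rw [iterate_succ_apply']
      convert hstep using 1
      push_cast
      ring
  exact (hpath _).minimalPeriod_embed hx <|
    minimalPeriod_of_semiconjOn (φ := fun p => (p, j)) hT (by simp [InjOn])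
      (fun p hp => h p hp j) hp

theorem minimalPeriod_embed_of_mem_openHexagon (hp : p ∈ openHexagon 1)
    (hx : (p, j) ∈ admissible) : (minimalPeriod latticeMap (embed (p, j)) : ℤ) =
      minimalPeriod (hexRotation 1) p * (6 * j + 7) := by
  refine minimalPeriod_embed_of_eq_hexRotation (mapsTo_hexRotation_openHexagon 1) ?_ hp hx
  rintro ⟨a, b⟩ ⟨-, hb, hab⟩ j
  have hb' := (abs_lt.1 hb).1
  have hab' := (abs_lt.1 hab).1
  exact squareMap_stay_of_pos (by grind) (by grind)

theorem minimalPeriod_embed_of_mem_closedHexagon (hp : p ∈ closedHexagon (-1))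
    (hx : (p, j) ∈ admissible) : (minimalPeriod latticeMap (embed (p, j)) : ℤ) =
      minimalPeriod (hexRotation (-1)) p * (6 * j + 7) := by
  refine minimalPeriod_embed_of_eq_hexRotation (mapsTo_hexRotation_closedHexagon (-1)) ?_ hp hx
  rintro ⟨a, b⟩ ⟨-, hb, hab⟩ j
  have hb' := (abs_le.1 hb).2
  have hab' := (abs_le.1 hab).2
  exact squareMap_stay_of_nonpos (by grind) (by grind)

/-- At level `j`, `2 * l` returns take total time `t` and act on the cell `T` as `ρ`, which has
order three. -/
structure IsThreefoldCell (T : Set (ℝ × ℝ)) (ρ : ℝ × ℝ → ℝ × ℝ) (l : ℕ) (j t : ℤ) : Prop where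
  dvd_two : l ∣ 2
  mapsTo : MapsTo ρ T T
  isPeriodicPt : ∀ p, IsPeriodicPt ρ 3 p
  path : ∀ p ∈ T, SquarePath (2 * l) t (p, j) (ρ p, j)
  half_notMem : ∀ p ∈ T, squareMap^[l] (p, j) ∉ T ×ˢ {j}

namespace IsThreefoldCell

variable {T : Set (ℝ × ℝ)} {ρ : ℝ × ℝ → ℝ × ℝ} {l : ℕ} {t : ℤ}

theorem minimalPeriod_embed_of_isFixedPt (h : IsThreefoldCell T ρ l j t) (hp : p ∈ T)
    (hx : (p, j) ∈ admissible) (hρ : IsFixedPt ρ p) :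
    (minimalPeriod latticeMap (embed (p, j)) : ℤ) = t := by
  have hpath := h.path p hp
  rw [hρ] at hpath
  have hl : ¬3 ∣ 2 * l := by
    rcases (Nat.dvd_prime Nat.prime_two).1 h.dvd_two with rfl | rfl <;> norm_num
  refine hpath.minimalPeriod_embed_of_dvd_six_pow (m := 2) hx
    ((mul_dvd_mul_left 2 h.dvd_two).trans (by norm_num)) (fun _ hhalf => h.half_notMem p hp ?_)
    fun h₃ => absurd h₃ hl
  rw [Nat.mul_div_cancel_left l two_pos] at hhalf
  rw [hhalf]
  exact ⟨hp, rfl⟩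

theorem minimalPeriod_embed_of_ne (h : IsThreefoldCell T ρ l j t) (hp : p ∈ T)
    (hx : (p, j) ∈ admissible) (hρ : ρ p ≠ p) :
    (minimalPeriod latticeMap (embed (p, j)) : ℤ) = 3 * t := by
  have h₁ := h.path p hp
  have h₂ := h.path _ (h.mapsTo hp)
  have h₃ := h.path _ (h.mapsTo (h.mapsTo hp))
  have hpath := (h₁.trans h₂).trans h₃
  rw [show ρ (ρ (ρ p)) = p from h.isPeriodicPt p] at hpath
  have htime := hpath.minimalPeriod_embed_of_dvd_six_pow (m := 2) hx ?_ (fun _ hhalf => ?_)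
    fun _ hthird => ?_
  · rw [htime]
    ring
  · rw [show 2 * l + 2 * l + 2 * l = 6 * l by ring]
    exact (mul_dvd_mul_left 6 h.dvd_two).trans (by norm_num)
  · rw [show (2 * l + 2 * l + 2 * l) / 2 = l + 2 * l by omega, iterate_add_apply,
      h₁.iterate_eq] at hhalf
    refine h.half_notMem _ (h.mapsTo hp) ?_
    rw [hhalf]
    exact ⟨hp, rfl⟩
  · rw [show (2 * l + 2 * l + 2 * l) / 3 = 2 * l by omega, h₁.iterate_eq] at hthird
    exact hρ (congrArg Prod.fst hthird)

theorem minimalPeriod_embed (h : IsThreefoldCell T ρ l j t) (hp : p ∈ T)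
    (hx : (p, j) ∈ admissible) : (minimalPeriod latticeMap (embed (p, j)) : ℤ) = t ∨
      (minimalPeriod latticeMap (embed (p, j)) : ℤ) = 3 * t :=
  (eq_or_ne (ρ p) p).imp (h.minimalPeriod_embed_of_isFixedPt hp hx)
    (h.minimalPeriod_embed_of_ne hp hx)

end IsThreefoldCell

/-- The hexagon about `(-1, 1)` whose points alternate between two levels. -/
def mixedHexagon : Set (ℝ × ℝ) :=
  {p | (-2 < p.1 ∧ p.1 < 0) ∧ (0 < p.2 ∧ p.2 < 2) ∧ p.1 + 1 < p.2 ∧ p.2 < p.1 + 3}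

/-- The triangle between the hexagons about `(-1, -1)` and `(-1, 1)`. -/
def lowerTriangle : Set (ℝ × ℝ) :=
  {p | -2 < p.1 ∧ p.2 < 0 ∧ p.1 + 1 < p.2}

/-- The triangle cut off by the hexagon about `(-1, 1)` at the corner `(-2, 2)`. -/
def upperTriangle : Set (ℝ × ℝ) :=
  {p | -2 < p.1 ∧ p.2 < 2 ∧ p.1 + 3 < p.2}

theorem isThreefoldCell_mixedHexagon (j : ℤ) :
    IsThreefoldCell mixedHexagon (fun p => (p.2 - p.1 - 3, -p.1)) 1 j (12 * j + 20) where
  dvd_two := one_dvd 2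
  mapsTo := by
    rintro ⟨a, b⟩ ⟨⟨ha, ha'⟩, ⟨hb, hb'⟩, hab, hab'⟩
    simp only at ha ha' hb hb' hab hab'
    refine ⟨⟨?_, ?_⟩, ⟨?_, ?_⟩, ?_, ?_⟩ <;> simp only <;> linarith
  isPeriodicPt p := Prod.ext (by simp only [iterate_succ_apply, iterate_zero_apply]; ring)
    (by simp only [iterate_succ_apply, iterate_zero_apply]; ring)
  path := by
    rintro ⟨a, b⟩ ⟨⟨ha, ha'⟩, ⟨hb, hb'⟩, hab, hab'⟩
    simp only at ha ha' hb hb' hab hab'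
    exact .congr <| .up <| .down <| .refl _
  half_notMem := by
    rintro ⟨a, b⟩ ⟨-, ⟨hb, -⟩, hab, -⟩ ⟨-, h⟩
    rw [iterate_one, squareMap_up hb hab.le] at h
    simp at h

theorem isThreefoldCell_lowerTriangle (j : ℤ) :
    IsThreefoldCell lowerTriangle (fun p => (-2 - p.2, p.1 - p.2 + 1)) 2 j (24 * j + 34) where
  dvd_two := dvd_rfl
  mapsTo := by
    rintro ⟨a, b⟩ ⟨ha, hb, hab⟩
    simp only at ha hb hab
    refine ⟨?_, ?_, ?_⟩ <;> simp only <;> linarith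
  isPeriodicPt p := Prod.ext (by simp only [iterate_succ_apply, iterate_zero_apply]; ring)
    (by simp only [iterate_succ_apply, iterate_zero_apply]; ring)
  path := by
    rintro ⟨a, b⟩ ⟨ha, hb, hab⟩
    simp only at ha hb hab
    exact .congr <| .stay_of_nonpos <| .stay_of_pos <| .up <| .down <| .refl _
  half_notMem := by
    rintro ⟨a, b⟩ ⟨ha, hb, hab⟩ ⟨h, -⟩
    simp only at ha hb hab
    have hpath : SquarePath 2 _ ((a, b), j) _ := .stay_of_nonpos <| .stay_of_pos <| .refl _
    rw [hpath.iterate_eq] at h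
    have := h.2.1
    simp only at this
    linarith

theorem isThreefoldCell_upperTriangle (j : ℤ) :
    IsThreefoldCell upperTriangle (fun p => (-p.2, p.1 - p.2 + 5)) 2 j (24 * j + 46) where
  dvd_two := dvd_rfl
  mapsTo := by
    rintro ⟨a, b⟩ ⟨ha, hb, hab⟩
    simp only at ha hb hab
    refine ⟨?_, ?_, ?_⟩ <;> simp only <;> linarith
  isPeriodicPt p := Prod.ext (by simp only [iterate_succ_apply, iterate_zero_apply]; ring)
    (by simp only [iterate_succ_apply, iterate_zero_apply]; ring)
  path := by
    rintro ⟨a, b⟩ ⟨ha, hb, hab⟩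
    simp only at ha hb hab
    exact .congr <| .up <| .stay_of_pos <| .stay_of_nonpos <| .down <| .refl _
  half_notMem := by
    rintro ⟨a, b⟩ ⟨ha, hb, hab⟩ ⟨-, h⟩
    simp only at ha hb hab
    have hpath : SquarePath 2 _ ((a, b), j) _ := .up <| .stay_of_pos <| .refl _
    rw [hpath.iterate_eq] at h
    simp at h

end Cells

section Edges

variable {b : ℝ}

theorem squarePath_neg_two_of_nonpos (hb : -1 < b) (hb' : b ≤ 0) (j : ℤ) :
    SquarePath 3 (18 * j + 27) ((-2, b), j) ((-2, -b), j) :=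
  .congr <| .stay_of_nonpos <| .up <| .down <| .refl _

theorem squarePath_neg_two_of_le_one (hb : 0 < b) (hb' : b ≤ 1) (j : ℤ) :
    SquarePath 3 (18 * j + 33) ((-2, b), j) ((-2, 2 - b), j) :=
  .congr <| .up <| .stay_of_nonpos <| .down <| .refl _

theorem squarePath_neg_two_of_one_lt (hb : 1 < b) (hb' : b < 2) (j : ℤ) :
    SquarePath 3 (18 * j + 33) ((-2, b), j) ((0, -b), j + 1) :=
  .congr <| .up <| .stay_of_pos <| .stay_of_nonpos <| .refl _

theorem squarePath_zero_of_lt_neg_one (hb : -2 < b) (hb' : b < -1) (j : ℤ) :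
    SquarePath 3 (18 * j + 15) ((0, b), j) ((0, -b), j - 1) :=
  .congr <| .down <| .up <| .down <| .refl _

theorem squarePath_zero_of_one_lt (hb : 1 < b) (hb' : b < 2) (j : ℤ) :
    SquarePath 3 (18 * j + 27) ((0, b), j) ((0, 2 - b), j) :=
  .congr <| .up <| .down <| .stay_of_nonpos <| .refl _

theorem squarePath_zero_of_lt_one (hb : 0 < b) (hb' : b < 1) (j : ℤ) :
    SquarePath 3 (18 * j + 27) ((0, b), j) ((-2, -b), j) :=
  .congr <| .stay_of_pos <| .up <| .down <| .refl _

theorem minimalPeriod_embed_neg_two_zero {j : ℤ} (hx : ((-2, 0), j) ∈ admissible) :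
    (minimalPeriod latticeMap (embed ((-2, 0), j)) : ℤ) = 18 * j + 27 := by
  have hpath : SquarePath 3 (18 * j + 27) ((-2, 0), j) ((-2, 0), j) :=
    (squarePath_neg_two_of_nonpos (by norm_num) le_rfl j).congr
  refine hpath.minimalPeriod_embed_of_dvd_six_pow (m := 1) hx (by norm_num) (by omega) fun _ h => ?_
  have h' := congrArg (·.1.1) h
  norm_num [squareMap_fst_fst] at h'

theorem minimalPeriod_embed_neg_two_one {j : ℤ} (hx : ((-2, 1), j) ∈ admissible) :
    (minimalPeriod latticeMap (embed ((-2, 1), j)) : ℤ) = 18 * j + 33 := by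
  have hpath : SquarePath 3 (18 * j + 33) ((-2, 1), j) ((-2, 1), j) :=
    (squarePath_neg_two_of_le_one one_pos le_rfl j).congr
  refine hpath.minimalPeriod_embed_of_dvd_six_pow (m := 1) hx (by norm_num) (by omega) fun _ h => ?_
  have h' := congrArg (·.1.1) h
  norm_num [squareMap_fst_fst] at h'

theorem minimalPeriod_embed_neg_two {j : ℤ} (hb : -1 < b) (hb' : b < 0)
    (hx : ((-2, b), j) ∈ admissible) :
    (minimalPeriod latticeMap (embed ((-2, b), j)) : ℤ) = 108 * j + 180 := by
  have h₁ := squarePath_neg_two_of_nonpos hb hb'.le j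
  have h₂ := h₁.trans (squarePath_neg_two_of_le_one (by linarith) (by linarith) j)
  have h₃ := h₂.trans (squarePath_neg_two_of_one_lt (by linarith) (by linarith) j)
  have h₄ := h₃.trans (squarePath_zero_of_lt_neg_one (by linarith) (by linarith) (j + 1))
  have h₅ := h₄.trans (squarePath_zero_of_one_lt (by linarith) (by linarith) _)
  have h₆ := h₅.trans (squarePath_zero_of_lt_one (by linarith) (by linarith) _)
  refine (h₆.congr (t' := 108 * j + 180) (b' := b) (j' := j)).minimalPeriod_embed_of_dvd_six_pow
    (m := 2) hx (by norm_num) (fun _ h => ?_) fun _ h => ?_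
  · rw [h₃.iterate_eq] at h
    simp at h
  · rw [h₂.iterate_eq] at h
    have := congrArg (·.1.2) h
    simp only at this
    linarith

end Edges

section Classification

/-- The minimal periods of points of the grid. -/
def gridPeriods : Set ℕ :=
  {p | ∃ n : ℕ, p = 36 * n + 6 ∨ p = 18 * n + 9 ∨ p = 18 * n + 15 ∨ p = 108 * n + 72}

/-- The minimal periods of points off the grid. -/
def offGridPeriods : Set ℕ :=
  {p | ∃ n : ℕ, p = 6 * n + 1 ∨ p = 12 * n + 8 ∨ p = 12 * n + 10 ∨ p = 36 * n + 6 ∨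
    p = 36 * n + 24 ∨ p = 36 * n + 30}

/-- The point with parameter `x`, if admissible, has its minimal period in `P`. -/
def PeriodIn (P : Set ℕ) (x : (ℝ × ℝ) × ℤ) : Prop :=
  x ∈ admissible → minimalPeriod latticeMap (embed x) ∈ P

variable {a b : ℝ} {j : ℤ} {P : Set ℕ} {p : ℝ × ℝ} {x : (ℝ × ℝ) × ℤ}

theorem minimalPeriod_embed_iterate_squareMap (hx : x ∈ admissible) (k : ℕ) :
    minimalPeriod latticeMap (embed (squareMap^[k] x)) = minimalPeriod latticeMap (embed x) := by
  rw [← isFirstReturn_squareMap.iterate_birkhoffSum hx,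
    minimalPeriod_iterate_of_injective latticeMap_injective]

theorem SquarePath.periodIn {k : ℕ} {t : ℤ} {y : (ℝ × ℝ) × ℤ} (h : SquarePath k t x y)
    (hy : PeriodIn P y) : PeriodIn P x := fun hx => by
  rw [← minimalPeriod_embed_iterate_squareMap hx k, h.iterate_eq]
  exact hy (h.mem_admissible hx)

theorem PeriodIn.of_squareMap (h : PeriodIn P (squareMap x)) : PeriodIn P x :=
  (SquarePath.of_squareMap_eq rfl (.refl _)).periodIn h

theorem disjoint_openHexagon_lowRegion : Disjoint (openHexagon 1) lowRegion :=
  disjoint_left.2 fun p hp hlow => by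
    simp only [openHexagon, lowRegion, mem_ofPred_eq, abs_lt] at hp hlow
    grind

theorem disjoint_closedHexagon_lowRegion : Disjoint (closedHexagon (-1)) lowRegion :=
  disjoint_left.2 fun p hp hlow => by
    simp only [closedHexagon, lowRegion, mem_ofPred_eq, abs_le] at hp hlow
    grind

theorem periodIn_gridPeriods_of_mem_closedHexagon (hp : p ∈ closedHexagon (-1))
    (hne : p ≠ (-1, -1)) : PeriodIn gridPeriods (p, j) := fun hx => by
  have hj := nonneg_of_mem_admissible hx (disjoint_left.1 disjoint_closedHexagon_lowRegion hp)
  have h := minimalPeriod_embed_of_mem_closedHexagon hp hx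
  rw [minimalPeriod_hexRotation hne] at h
  exact ⟨(j + 1).toNat, by grind⟩

theorem periodIn_gridPeriods_neg_two_zero : PeriodIn gridPeriods ((-2, 0), j) := fun hx => by
  have hj := neg_one_le_of_mem_admissible hx
  have h := minimalPeriod_embed_neg_two_zero hx
  exact ⟨(j + 1).toNat, by grind⟩

theorem periodIn_gridPeriods_neg_two_one : PeriodIn gridPeriods ((-2, 1), j) := fun hx => by
  have hj := neg_one_le_of_mem_admissible hx
  have h := minimalPeriod_embed_neg_two_one hx
  exact ⟨(j + 1).toNat, by grind⟩

theorem periodIn_gridPeriods_neg_two_of_neg (hb : -1 < b) (hb' : b < 0) :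
    PeriodIn gridPeriods ((-2, b), j) := fun hx => by
  have hj := neg_one_le_of_mem_admissible hx
  have h := minimalPeriod_embed_neg_two hb hb' hx
  exact ⟨(j + 1).toNat, by grind⟩

theorem periodIn_gridPeriods_zero_of_lt_one (hb : 0 < b) (hb' : b < 1) :
    PeriodIn gridPeriods ((0, b), j) :=
  (squarePath_zero_of_lt_one hb hb' j).periodIn <|
    periodIn_gridPeriods_neg_two_of_neg (by linarith) (by linarith)

theorem periodIn_gridPeriods_zero_of_one_lt (hb : 1 < b) (hb' : b < 2) :
    PeriodIn gridPeriods ((0, b), j) :=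
  (squarePath_zero_of_one_lt hb hb' j).periodIn <|
    periodIn_gridPeriods_zero_of_lt_one (by linarith) (by linarith)

theorem periodIn_gridPeriods_zero_of_lt_neg_one (hb : -2 < b) (hb' : b < -1) :
    PeriodIn gridPeriods ((0, b), j) :=
  (squarePath_zero_of_lt_neg_one hb hb' j).periodIn <|
    periodIn_gridPeriods_zero_of_one_lt (by linarith) (by linarith)

theorem periodIn_gridPeriods_neg_two_of_one_lt (hb : 1 < b) (hb' : b < 2) :
    PeriodIn gridPeriods ((-2, b), j) :=
  (squarePath_neg_two_of_one_lt hb hb' j).periodIn <|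
    periodIn_gridPeriods_zero_of_lt_neg_one (by linarith) (by linarith)

theorem periodIn_gridPeriods_neg_two_of_lt_one (hb : 0 < b) (hb' : b < 1) :
    PeriodIn gridPeriods ((-2, b), j) :=
  (squarePath_neg_two_of_le_one hb hb'.le j).periodIn <|
    periodIn_gridPeriods_neg_two_of_one_lt (by linarith) (by linarith)

theorem periodIn_gridPeriods_neg_two (hb : -2 ≤ b) (hb' : b < 2) :
    PeriodIn gridPeriods ((-2, b), j) := by
  rcases le_or_gt b (-1) with h | h
  · exact periodIn_gridPeriods_of_mem_closedHexagon (by grind [closedHexagon]) (by grind)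
  rcases lt_trichotomy b 0 with h₀ | rfl | h₀
  · exact periodIn_gridPeriods_neg_two_of_neg h h₀
  · exact periodIn_gridPeriods_neg_two_zero
  rcases lt_trichotomy b 1 with h₁ | rfl | h₁
  · exact periodIn_gridPeriods_neg_two_of_lt_one h₀ h₁
  · exact periodIn_gridPeriods_neg_two_one
  · exact periodIn_gridPeriods_neg_two_of_one_lt h₁ hb'

theorem periodIn_gridPeriods_zero (hb : -2 ≤ b) (hb' : b < 2) :
    PeriodIn gridPeriods ((0, b), j) := by
  rcases hb.eq_or_lt with rfl | h
  · have hpath : SquarePath 1 (6 * j + 7) ((0, -2), j) ((-2, 1), j - 1) :=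
      .congr <| .down <| .refl _
    exact hpath.periodIn periodIn_gridPeriods_neg_two_one
  rcases lt_or_ge b (-1) with h' | h'
  · exact periodIn_gridPeriods_zero_of_lt_neg_one h h'
  rcases le_or_gt b 0 with h₀ | h₀
  · exact periodIn_gridPeriods_of_mem_closedHexagon (by grind [closedHexagon]) (by grind)
  rcases lt_trichotomy b 1 with h₁ | rfl | h₁
  · exact periodIn_gridPeriods_zero_of_lt_one h₀ h₁
  · have hpath : SquarePath 2 (12 * j + 20) ((0, 1), j) ((-2, 0), j) :=
      .congr <| .up <| .down <| .refl _
    exact hpath.periodIn periodIn_gridPeriods_neg_two_zero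
  · exact periodIn_gridPeriods_zero_of_one_lt h₁ hb'

theorem periodIn_gridPeriods_of_fst (h : x.1.1 = -2 ∨ x.1.1 = 0) : PeriodIn gridPeriods x := by
  obtain ⟨⟨a, b⟩, j⟩ := x
  intro hx
  have ⟨hb, hb'⟩ := hx.1.2
  obtain rfl | rfl := h
  · exact periodIn_gridPeriods_neg_two hb hb' hx
  · exact periodIn_gridPeriods_zero hb hb' hx

theorem periodIn_gridPeriods_of_snd (h : x.1.2 = -2 ∨ x.1.2 = 0) : PeriodIn gridPeriods x :=
  .of_squareMap <| periodIn_gridPeriods_of_fst <| by rwa [squareMap_fst_fst]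

theorem periodIn_gridPeriods_of_sub (h : a - b = -3 ∨ a - b = -1 ∨ a - b = 1 ∨ a - b = 3) :
    PeriodIn gridPeriods ((a, b), j) := fun hx => by
  refine PeriodIn.of_squareMap (periodIn_gridPeriods_of_snd ?_) hx
  have := mem_Ico.1 (mapsTo_squareMap_admissible hx).1.2
  grind [squareMap, hexRotation]

theorem eq_neg_two_or_eq_zero {c : ℝ} (hc : c ∈ Ico (-2 : ℝ) 2) (h : ∃ k : ℤ, c = 2 * k) :
    c = -2 ∨ c = 0 := by
  obtain ⟨k, rfl⟩ := h
  have h₁ : -1 ≤ k := by exact_mod_cast (by linarith [hc.1] : (-1 : ℝ) ≤ k)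
  have h₂ : k < 1 := by exact_mod_cast (by linarith [hc.2] : (k : ℝ) < 1)
  obtain rfl | rfl : k = -1 ∨ k = 0 := by omega
  · exact .inl (by norm_num)
  · exact .inr (by norm_num)

theorem mem_latticeGrid_of_embed_mem {p : ℝ × ℝ} (h : embed (p, j) ∈ latticeGrid) :
    p ∈ latticeGrid := by
  have shift {d e : ℤ} (h : (p.1 - 2 * d, p.2 - 2 * e) ∈ latticeGrid) : p ∈ latticeGrid := by
    obtain ⟨k, hk⟩ | ⟨k, hk⟩ | ⟨k, hk⟩ := h <;> simp only at hk
    · exact .inl ⟨k + d - e, by push_cast; linarith⟩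
    · exact .inr <| .inl ⟨k + e, by push_cast; linarith⟩
    · exact .inr <| .inr ⟨k + d, by push_cast; linarith⟩
  unfold embed at h
  split_ifs at h
  · refine shift (d := 1) (e := -2 * j - 1) ?_
    convert h using 2 <;> push_cast <;> ring
  · refine shift (d := 0) (e := -2 * j - 1) ?_
    convert h using 2 <;> push_cast <;> ring

theorem periodIn_gridPeriods_of_mem_latticeGrid (h : p ∈ latticeGrid) :
    PeriodIn gridPeriods (p, j) := fun hx => by
  obtain ⟨a, b⟩ := p
  have ⟨⟨ha, ha'⟩, hb, hb'⟩ := hx.1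
  obtain ⟨k, hk⟩ | hk | hk := h <;> simp only at hk ha ha' hb hb'
  · refine periodIn_gridPeriods_of_sub ?_ hx
    have h₁ : -3 < k := by exact_mod_cast (by linarith : (-3 : ℝ) < k)
    have h₂ : k < 2 := by exact_mod_cast (by linarith : (k : ℝ) < 2)
    rw [hk]
    obtain rfl | rfl | rfl | rfl : k = -2 ∨ k = -1 ∨ k = 0 ∨ k = 1 := by omega
    all_goals norm_num
  · exact periodIn_gridPeriods_of_snd (eq_neg_two_or_eq_zero hx.1.2 hk) hx
  · exact periodIn_gridPeriods_of_fst (eq_neg_two_or_eq_zero hx.1.1 hk) hx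

theorem periodIn_offGridPeriods_of_mem_openHexagon (hp : p ∈ openHexagon 1) :
    PeriodIn offGridPeriods (p, j) := fun hx => by
  have hj := nonneg_of_mem_admissible hx (disjoint_left.1 disjoint_openHexagon_lowRegion hp)
  have h := minimalPeriod_embed_of_mem_openHexagon hp hx
  refine ⟨(j + 1).toNat, ?_⟩
  rcases eq_or_ne p (1, 1) with rfl | hne
  · rw [minimalPeriod_hexRotation_center] at h
    grind
  · rw [minimalPeriod_hexRotation hne] at h
    grind

theorem periodIn_offGridPeriods_of_mem_closedHexagon (hp : p ∈ closedHexagon (-1)) :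
    PeriodIn offGridPeriods (p, j) := fun hx => by
  have hj := nonneg_of_mem_admissible hx (disjoint_left.1 disjoint_closedHexagon_lowRegion hp)
  have h := minimalPeriod_embed_of_mem_closedHexagon hp hx
  refine ⟨(j + 1).toNat, ?_⟩
  rcases eq_or_ne p (-1, -1) with rfl | hne
  · rw [minimalPeriod_hexRotation_center] at h
    grind
  · rw [minimalPeriod_hexRotation hne] at h
    grind

theorem periodIn_offGridPeriods_of_mem_mixedHexagon (hp : p ∈ mixedHexagon) :
    PeriodIn offGridPeriods (p, j) := fun hx => by
  have hj := neg_one_le_of_mem_admissible hx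
  have h := (isThreefoldCell_mixedHexagon j).minimalPeriod_embed hp hx
  exact ⟨(j + 1).toNat, by grind⟩

theorem periodIn_offGridPeriods_of_mem_lowerTriangle (hp : p ∈ lowerTriangle) :
    PeriodIn offGridPeriods (p, j) := fun hx => by
  have hj := neg_one_le_of_mem_admissible hx
  have h := (isThreefoldCell_lowerTriangle j).minimalPeriod_embed hp hx
  exact ⟨(2 * j + 2).toNat, by grind⟩

theorem periodIn_offGridPeriods_of_mem_upperTriangle (hp : p ∈ upperTriangle) :
    PeriodIn offGridPeriods (p, j) := fun hx => by
  have hj := neg_one_le_of_mem_admissible hx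
  have h := (isThreefoldCell_upperTriangle j).minimalPeriod_embed hp hx
  exact ⟨(2 * j + 3).toNat, by grind⟩

theorem periodIn_offGridPeriods_of_pos_of_lt (ha : 0 < a) (hb : b < 2) (hab : a + 1 < b) :
    PeriodIn offGridPeriods ((a, b), j) :=
  SquarePath.periodIn (.up <| .down <| .refl _) <|
    periodIn_offGridPeriods_of_mem_lowerTriangle (by grind [lowerTriangle])

theorem periodIn_offGridPeriods_of_neg_of_lt (ha : a < 0) (hb : -2 < b) (hab : b + 1 < a) :
    PeriodIn offGridPeriods ((a, b), j) :=
  SquarePath.periodIn (.down <| .refl _) <|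
    periodIn_offGridPeriods_of_mem_upperTriangle (by grind [upperTriangle])

theorem periodIn_offGridPeriods_of_pos_of_neg (ha : 0 < a) (hb : b < 0) (hab : a < b + 1) :
    PeriodIn offGridPeriods ((a, b), j) :=
  SquarePath.periodIn (.stay_of_nonpos <| .refl _) <|
    periodIn_offGridPeriods_of_neg_of_lt (by linarith) (by linarith) (by linarith)

theorem periodIn_offGridPeriods_of_neg (ha : a ∈ Ioo (-2) 0) (hb : b ∈ Ioo (-2) 2) (hb₀ : b ≠ 0)
    (h₁ : a - b ≠ -3) (h₂ : a - b ≠ -1) (h₃ : a - b ≠ 1) :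
    PeriodIn offGridPeriods ((a, b), j) := by
  obtain ⟨ha, ha'⟩ := ha
  obtain ⟨hb, hb'⟩ := hb
  rcases lt_or_gt_of_ne hb₀ with h | h <;> rcases lt_or_gt_of_ne h₂ with hab | hab
  · exact periodIn_offGridPeriods_of_mem_lowerTriangle (by grind [lowerTriangle])
  · rcases lt_or_gt_of_ne h₃ with hba | hba
    · exact periodIn_offGridPeriods_of_mem_closedHexagon (by grind [closedHexagon])
    · exact periodIn_offGridPeriods_of_neg_of_lt ha' hb (by linarith)
  · rcases lt_or_gt_of_ne h₁ with hba | hba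
    · exact periodIn_offGridPeriods_of_mem_upperTriangle (by grind [upperTriangle])
    · exact periodIn_offGridPeriods_of_mem_mixedHexagon (by grind [mixedHexagon])
  · exact SquarePath.periodIn (.stay_of_pos <| .refl _) <|
      periodIn_offGridPeriods_of_pos_of_lt h (by linarith) (by linarith)

theorem periodIn_offGridPeriods_of_pos (ha : a ∈ Ioo 0 2) (hb : b ∈ Ioo (-2) 2) (hb₀ : b ≠ 0)
    (h₁ : a - b ≠ -1) (h₂ : a - b ≠ 1) (h₃ : a - b ≠ 3) :
    PeriodIn offGridPeriods ((a, b), j) := by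
  obtain ⟨ha, ha'⟩ := ha
  obtain ⟨hb, hb'⟩ := hb
  rcases lt_or_gt_of_ne hb₀ with h | h <;> rcases lt_or_gt_of_ne h₂ with hab | hab
  · exact periodIn_offGridPeriods_of_pos_of_neg ha h (by linarith)
  · rcases lt_or_gt_of_ne h₃ with hba | hba
    · exact SquarePath.periodIn (.down <| .refl _) <|
        periodIn_offGridPeriods_of_mem_mixedHexagon (by grind [mixedHexagon])
    · exact SquarePath.periodIn (.down <| .refl _) <|
        periodIn_offGridPeriods_of_mem_lowerTriangle (by grind [lowerTriangle])
  · rcases lt_or_gt_of_ne h₁ with hba | hba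
    · exact periodIn_offGridPeriods_of_pos_of_lt ha hb' (by linarith)
    · exact periodIn_offGridPeriods_of_mem_openHexagon (by grind [openHexagon])
  · exact SquarePath.periodIn (.stay_of_pos <| .refl _) <|
      periodIn_offGridPeriods_of_pos_of_neg h (by linarith) (by linarith)

theorem periodIn_offGridPeriods_of_notMem_latticeGrid (h : p ∉ latticeGrid) :
    PeriodIn offGridPeriods (p, j) := fun hx => by
  obtain ⟨a, b⟩ := p
  have ⟨⟨ha, ha'⟩, hb, hb'⟩ := hx.1
  have hfst (m : ℤ) : a ≠ 2 * m := fun hm => h (.inr (.inr ⟨m, hm⟩))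
  have hsnd (l : ℤ) : b ≠ 2 * l := fun hl => h (.inr (.inl ⟨l, hl⟩))
  have hsub (k : ℤ) : a - b ≠ 2 * k + 1 := fun hk => h (.inl ⟨k, hk⟩)
  have hb₂ : b ∈ Ioo (-2) 2 := ⟨hb.lt_of_ne' (by simpa using hsnd (-1)), hb'⟩
  have hb₀ : b ≠ 0 := by simpa using hsnd 0
  have h₁ : a - b ≠ -1 := by convert hsub (-1) using 1; norm_num
  have h₂ : a - b ≠ 1 := by simpa using hsub 0
  rcases lt_or_gt_of_ne (show a ≠ 0 by simpa using hfst 0) with ha₀ | ha₀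
  · have ha₂ : a ∈ Ioo (-2) 0 := ⟨ha.lt_of_ne' (by simpa using hfst (-1)), ha₀⟩
    refine periodIn_offGridPeriods_of_neg ha₂ hb₂ hb₀ ?_ h₁ h₂ hx
    convert hsub (-2) using 1
    norm_num
  · refine periodIn_offGridPeriods_of_pos ⟨ha₀, ha'⟩ hb₂ hb₀ h₁ h₂ ?_ hx
    convert hsub 1 using 1
    norm_num

theorem minimalPeriod_latticeMap_mem_gridPeriods (hp : p ∈ latticeGrid) :
    minimalPeriod latticeMap p ∈ gridPeriods := by
  by_cases hc : p ∈ core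
  · rcases minimalPeriod_latticeMap_of_mem_core hc with h | ⟨-, h⟩
    · exact ⟨0, .inl h⟩
    · exact absurd hp h
  · obtain ⟨n, ⟨q, j⟩, hx, h⟩ := exists_iterate_eq_embed hc
    rw [← minimalPeriod_iterate_of_injective latticeMap_injective n, h]
    refine periodIn_gridPeriods_of_mem_latticeGrid (mem_latticeGrid_of_embed_mem (j := j) ?_) hx
    exact h ▸ mapsTo_latticeMap_latticeGrid.iterate n hp

theorem minimalPeriod_latticeMap_mem_union (p : ℝ × ℝ) :
    minimalPeriod latticeMap p ∈ gridPeriods ∪ offGridPeriods := by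
  by_cases hc : p ∈ core
  · rcases minimalPeriod_latticeMap_of_mem_core hc with h | ⟨h, -⟩
    · exact .inl ⟨0, .inl h⟩
    · exact .inr ⟨0, .inl h⟩
  · obtain ⟨n, ⟨q, j⟩, hx, h⟩ := exists_iterate_eq_embed hc
    rw [← minimalPeriod_iterate_of_injective latticeMap_injective n, h]
    by_cases hq : q ∈ latticeGrid
    · exact .inl (periodIn_gridPeriods_of_mem_latticeGrid hq hx)
    · exact .inr (periodIn_offGridPeriods_of_notMem_latticeGrid hq hx)

end Classification

section Realization

variable {a b : ℝ} {j : ℤ} {n : ℕ}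

theorem mem_admissible_of_lt (ha : -2 ≤ a) (ha' : a ≤ 0) (hb : -2 ≤ b) (hb' : b < 2)
    (hab : a + 1 < b) (hj : -1 ≤ j) : ((a, b), j) ∈ admissible :=
  ⟨⟨⟨ha, by linarith⟩, hb, hb'⟩, by grind [lowRegion]⟩

theorem mem_admissible_of_nonneg {p : ℝ × ℝ} (ha : p.1 ∈ Ico (-2) 2) (hb : p.2 ∈ Ico (-2) 2)
    (hj : 0 ≤ j) : (p, j) ∈ admissible :=
  ⟨⟨ha, hb⟩, .inl hj⟩

theorem mem_range_minimalPeriod_of_embed {t : ℤ} {x : (ℝ × ℝ) × ℤ}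
    (h : (minimalPeriod latticeMap (embed x) : ℤ) = t) (ht : t = n) :
    n ∈ range (minimalPeriod latticeMap) :=
  ⟨embed x, by exact_mod_cast h.trans ht⟩

theorem gridPeriods_subset_range : gridPeriods ⊆ range (minimalPeriod latticeMap) := by
  rintro _ ⟨n, rfl | rfl | rfl | rfl⟩
  · rcases n with _ | n
    · refine ⟨(0, 0), (minimalPeriod_latticeMap_of_mem_core ?_).resolve_right fun h => h.2 ?_⟩
      · exact .inl (by norm_num [closedHexagon])
      · exact .inr (.inl ⟨0, by simp⟩)
    · refine mem_range_minimalPeriod_of_embed (minimalPeriod_embed_of_mem_closedHexagon (j := n)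
        (p := (-2, -2)) (by norm_num [closedHexagon])
        (mem_admissible_of_nonneg (by norm_num) (by norm_num) n.cast_nonneg)) ?_
      rw [minimalPeriod_hexRotation (by norm_num)]
      push_cast
      ring
  · exact mem_range_minimalPeriod_of_embed (minimalPeriod_embed_neg_two_zero (j := n - 1) <| by
      apply mem_admissible_of_lt <;> first | omega | norm_num) (by push_cast; ring)
  · exact mem_range_minimalPeriod_of_embed (minimalPeriod_embed_neg_two_one (j := n - 1) <| by
      apply mem_admissible_of_lt <;> first | omega | norm_num) (by push_cast; ring)
  · exact mem_range_minimalPeriod_of_embed (minimalPeriod_embed_neg_two (b := -1 / 2) (j := n - 1)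
      (by norm_num) (by norm_num) <| by
      apply mem_admissible_of_lt <;> first | omega | norm_num) (by push_cast; ring)

theorem mem_range_minimalPeriod_of_six_mul_add_one (n : ℕ) :
    6 * n + 1 ∈ range (minimalPeriod latticeMap) := by
  have hmem : ((1, 1) : ℝ × ℝ) ∈ openHexagon 1 := by norm_num [openHexagon]
  rcases n with _ | n
  · have hfix : latticeMap (1, 1) = (1, 1) := by
      rw [latticeMap_of_nonneg zero_le_one, hexRotation_center]
    exact ⟨(1, 1), minimalPeriod_eq_one_iff_isFixedPt.2 hfix⟩
  · refine mem_range_minimalPeriod_of_embed (minimalPeriod_embed_of_mem_openHexagon (j := n) hmem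
      (mem_admissible_of_nonneg (by norm_num) (by norm_num) n.cast_nonneg)) ?_
    rw [minimalPeriod_hexRotation_center]
    push_cast
    ring

theorem mem_range_minimalPeriod_of_twelve_mul_add_eight (n : ℕ) :
    12 * n + 8 ∈ range (minimalPeriod latticeMap) := by
  refine mem_range_minimalPeriod_of_embed
    ((isThreefoldCell_mixedHexagon (n - 1)).minimalPeriod_embed_of_isFixedPt
      (p := (-1, 1)) ?_ ?_ ?_) (by push_cast; ring)
  · norm_num [mixedHexagon]
  · apply mem_admissible_of_lt <;> first | omega | norm_num
  · norm_num [IsFixedPt]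

theorem mem_range_minimalPeriod_of_thirtySix_mul_add_twentyFour (n : ℕ) :
    36 * n + 24 ∈ range (minimalPeriod latticeMap) := by
  refine mem_range_minimalPeriod_of_embed
    ((isThreefoldCell_mixedHexagon (n - 1)).minimalPeriod_embed_of_ne
      (p := (-3 / 2, 1)) ?_ ?_ ?_) (by push_cast; ring)
  · norm_num [mixedHexagon]
  · apply mem_admissible_of_lt <;> first | omega | norm_num
  · norm_num

theorem mem_range_minimalPeriod_of_twelve_mul_add_ten (n : ℕ) :
    12 * n + 10 ∈ range (minimalPeriod latticeMap) := by
  obtain ⟨m, rfl | rfl⟩ := n.even_or_odd'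
  · refine mem_range_minimalPeriod_of_embed
      ((isThreefoldCell_lowerTriangle (m - 1)).minimalPeriod_embed_of_isFixedPt
        (p := (-5 / 3, -1 / 3)) ?_ ?_ ?_) (by push_cast; ring)
    · norm_num [lowerTriangle]
    · apply mem_admissible_of_lt <;> first | omega | norm_num
    · norm_num [IsFixedPt]
  · refine mem_range_minimalPeriod_of_embed
      ((isThreefoldCell_upperTriangle (m - 1)).minimalPeriod_embed_of_isFixedPt
        (p := (-5 / 3, 5 / 3)) ?_ ?_ ?_) (by push_cast; ring)
    · norm_num [upperTriangle]
    · apply mem_admissible_of_lt <;> first | omega | norm_num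
    · norm_num [IsFixedPt]

theorem mem_range_minimalPeriod_of_thirtySix_mul_add_thirty (n : ℕ) :
    36 * n + 30 ∈ range (minimalPeriod latticeMap) := by
  obtain ⟨m, rfl | rfl⟩ := n.even_or_odd'
  · refine mem_range_minimalPeriod_of_embed
      ((isThreefoldCell_lowerTriangle (m - 1)).minimalPeriod_embed_of_ne
        (p := (-7 / 4, -1 / 4)) ?_ ?_ ?_) (by push_cast; ring)
    · norm_num [lowerTriangle]
    · apply mem_admissible_of_lt <;> first | omega | norm_num
    · norm_num
  · refine mem_range_minimalPeriod_of_embed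
      ((isThreefoldCell_upperTriangle (m - 1)).minimalPeriod_embed_of_ne
        (p := (-7 / 4, 7 / 4)) ?_ ?_ ?_) (by push_cast; ring)
    · norm_num [upperTriangle]
    · apply mem_admissible_of_lt <;> first | omega | norm_num
    · norm_num

theorem offGridPeriods_subset_range : offGridPeriods ⊆ range (minimalPeriod latticeMap) := by
  rintro _ ⟨n, rfl | rfl | rfl | rfl | rfl | rfl⟩
  · exact mem_range_minimalPeriod_of_six_mul_add_one n
  · exact mem_range_minimalPeriod_of_twelve_mul_add_eight n
  · exact mem_range_minimalPeriod_of_twelve_mul_add_ten n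
  · exact gridPeriods_subset_range ⟨n, .inl rfl⟩
  · exact mem_range_minimalPeriod_of_thirtySix_mul_add_twentyFour n
  · exact mem_range_minimalPeriod_of_thirtySix_mul_add_thirty n

theorem range_minimalPeriod_F : range (minimalPeriod F) = gridPeriods ∪ offGridPeriods := by
  have h : minimalPeriod F = minimalPeriod latticeMap ∘ latticeCoord :=
    funext fun q => (minimalPeriod_latticeCoord q).symm
  rw [h, latticeCoord.surjective.range_comp]
  exact (range_subset_iff.2 minimalPeriod_latticeMap_mem_union).antisymm
    (union_subset gridPeriods_subset_range offGridPeriods_subset_range)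

end Realization

/-- Every grid point is periodic with minimal period `36n+6`, `18n+9`,
`18n+15` or `108n+72`; `F` is pointwise periodic, and its set of minimal
periods is the displayed union of arithmetic families. -/
theorem pointwise_periodic_pi_div_three :
    (∀ q ∈ grid, ∃ n : ℕ,
        Function.minimalPeriod F q = 36 * n + 6 ∨
        Function.minimalPeriod F q = 18 * n + 9 ∨
        Function.minimalPeriod F q = 18 * n + 15 ∨
        Function.minimalPeriod F q = 108 * n + 72) ∧
    (∀ q : ℝ × ℝ, ∃ p : ℕ, 1 ≤ p ∧ F^[p] q = q) ∧
    {p : ℕ | ∃ q : ℝ × ℝ, Function.minimalPeriod F q = p} =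
      {p : ℕ | ∃ n : ℕ, p = 6 * n + 1} ∪
      {p : ℕ | ∃ n : ℕ, p = 12 * n + 8} ∪
      {p : ℕ | ∃ n : ℕ, p = 12 * n + 10} ∪
      {p : ℕ | ∃ n : ℕ, p = 18 * n + 9} ∪
      {p : ℕ | ∃ n : ℕ, p = 18 * n + 15} ∪
      {p : ℕ | ∃ n : ℕ, p = 36 * n + 6} ∪
      {p : ℕ | ∃ n : ℕ, p = 36 * n + 24} ∪
      {p : ℕ | ∃ n : ℕ, p = 36 * n + 30} ∪
      {p : ℕ | ∃ n : ℕ, p = 108 * n + 72} := by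
  refine ⟨fun q hq => ?_, fun q => ⟨minimalPeriod F q, ?_, isPeriodicPt_minimalPeriod F q⟩, ?_⟩
  · rw [← minimalPeriod_latticeCoord]
    exact minimalPeriod_latticeMap_mem_gridPeriods (latticeCoord_mem_latticeGrid hq)
  · have h : minimalPeriod F q ∈ gridPeriods ∪ offGridPeriods :=
      range_minimalPeriod_F ▸ mem_range_self q
    obtain ⟨n, h⟩ | ⟨n, h⟩ := h <;> omega
  · change range (minimalPeriod F) = _
    rw [range_minimalPeriod_F]
    ext p
    simp only [mem_union, mem_ofPred_eq, gridPeriods, offGridPeriods, exists_or]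
    tauto
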